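/- Let S be a deterministic TFSM with output delays and let α = (i_1,t_1)…(i_n,t_n) and α' = (i_1,t'_1)…(i_n,t'_n) be non-integer timed input sequences with the same inputs such that α ∼_S α' (for every state s, α and α' induce exactly the same sequences of transitions from s). Then α is a homing sequence for S if and only if α' is a homing sequence for S. -/

import Mathlib

/-!
A run of a non-integer sequence can be read back from its timed outputs: if two outputs at times
`t_j + d_j` and `t_k + d_k` coincide then `t_j - t_k` is an integer, so `j = k`. Hence if the raw
outputs of two runs of `α` are permutations of each other, the two runs have the same outputs and
delays step by step (`outDelay_eq_of_perm`), and then they also have the same raw outputs along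
`α'`. Since `α` and `α'` induce the same runs, `timedOut` identifies the same pairs of states for
both sequences (`timedOut_eq_transfer`), including the case where both sets are empty because no
run exists; here one uses that every run has a sorted reordering of its outputs. The final state
of a run depends only on the initial state and the transitions taken, so reachability is also the
same for both sequences.
-/

/-- A timed guard: an interval with natural-number endpoints, left-closed, and
either right-open (`rightClosed = false`, i.e. `[lo, hi)`) or right-closed
(`rightClosed = true`, i.e. `[lo, hi]`; point intervals are `[u,u]`). -/
structure Guard where
  lo : ℕ
  hi : ℕ
  rightClosed : Bool
deriving DecidableEq

/-- Membership of a timestamp in a guard. -/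
def GuardMem (g : Guard) (t : ℝ) : Prop :=
  (g.lo : ℝ) ≤ t ∧ (if g.rightClosed then t ≤ (g.hi : ℝ) else t < (g.hi : ℝ))

/-- Guard inclusion (as sets of timestamps). -/
def GuardSub (g g' : Guard) : Prop := ∀ t : ℝ, GuardMem g t → GuardMem g' t

/-- A transition of a TFSM with output delays: source state, input, timed guard,
output, positive integer output delay, destination state. -/
structure TTrans (S I O : Type) where
  src : S
  inp : I
  guard : Guard
  out : O
  delay : ℕ+
  dst : S

/-- A TFSM with output delays over states `S`, inputs `I`, outputs `O`,
given by its transition relation. -/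
abbrev TFSM (S I O : Type) := Set (TTrans S I O)

variable {S I O A B : Type}

/-- Determinism: any two distinct transitions from the same state on the same input
have disjoint guards. -/
def TFSMDeterministic (M : TFSM S I O) : Prop :=
  ∀ tr ∈ M, ∀ tr' ∈ M, tr.src = tr'.src → tr.inp = tr'.inp → tr ≠ tr' →
    ∀ t : ℝ, ¬ (GuardMem tr.guard t ∧ GuardMem tr'.guard t)

/-- A timed input sequence: nonnegative, nondecreasing timestamps. -/
def IsTimedInputSeq (α : List (I × ℝ)) : Prop :=
  (∀ p ∈ α, 0 ≤ p.2) ∧ List.Chain' (· ≤ ·) (α.map Prod.snd)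

/-- `TRunTo M s t0 α trs sf`: starting at state `s` at time `t0`, the timed input
sequence `α` induces the sequence of transitions `trs`, ending at state `sf`. -/
inductive TRunTo (M : TFSM S I O) : S → ℝ → List (I × ℝ) → List (TTrans S I O) → S → Prop
  | nil (s : S) (t0 : ℝ) : TRunTo M s t0 [] [] s
  | cons {s sf : S} {t0 t : ℝ} {i : I} {tr : TTrans S I O}
      {rest : List (I × ℝ)} {trs : List (TTrans S I O)} :
      tr ∈ M → tr.src = s → tr.inp = i → GuardMem tr.guard (t - t0) →
      TRunTo M tr.dst t rest trs sf →
      TRunTo M s t0 ((i, t) :: rest) (tr :: trs) sf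

/-- `α` induces the sequence of transitions `trs` from state `s`. -/
def TInduces (M : TFSM S I O) (s : S) (α : List (I × ℝ)) (trs : List (TTrans S I O)) : Prop :=
  ∃ sf : S, TRunTo M s 0 α trs sf

/-- `Dom(s)`: the timed input sequences inducing at least one sequence of transitions from `s`. -/
def TDom (M : TFSM S I O) (s : S) : Set (List (I × ℝ)) :=
  { α | IsTimedInputSeq α ∧ ∃ trs, TInduces M s α trs }

/-- `next_state(s, α) = sf` (as a relation, since `next_state` is partial). -/
def TReaches (M : TFSM S I O) (s : S) (α : List (I × ℝ)) (sf : S) : Prop :=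
  ∃ trs, TRunTo M s 0 α trs sf

/-- The timed outputs of a run: the `j`-th transition produces its output at time
`t_j + d_j`. -/
def rawOutputs (α : List (I × ℝ)) (trs : List (TTrans S I O)) : List (O × ℝ) :=
  List.zipWith (fun p tr => (tr.out, p.2 + ((tr.delay : ℕ) : ℝ))) α trs

/-- `timed_out(s, α)`: all time-sorted reorderings of the timed outputs of the run of `α` at `s`. -/
def timedOut (M : TFSM S I O) (s : S) (α : List (I × ℝ)) : Set (List (O × ℝ)) :=
  { β | ∃ trs sf, TRunTo M s 0 α trs sf ∧ List.Perm β (rawOutputs α trs) ∧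
        List.Chain' (· ≤ ·) (β.map Prod.snd) }

/-- Homing sequence for a TFSM with output delays. -/
def THoming (M : TFSM S I O) (α : List (I × ℝ)) : Prop :=
  IsTimedInputSeq α ∧ ∀ s1 s2 : S, timedOut M s1 α = timedOut M s2 α →
    ∃ sf : S, TReaches M s1 α sf ∧ TReaches M s2 α sf

/-- Synchronizing sequence for a TFSM with output delays. -/
def TSync (M : TFSM S I O) (α : List (I × ℝ)) : Prop :=
  IsTimedInputSeq α ∧ ∃ sf : S, ∀ s : S, TReaches M s α sf

/-- A timed input sequence is non-integer if the difference of any two distinct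
timestamps is not an integer. -/
def NonInteger (α : List (I × ℝ)) : Prop :=
  ∀ j k : Fin α.length, j ≠ k → ∀ z : ℤ, (α.get j).2 - (α.get k).2 ≠ (z : ℝ)

/-- A transition of an (untimed) FSM. -/
structure FTrans (S A B : Type) where
  src : S
  inp : A
  out : B
  dst : S

/-- An (untimed) FSM given by its transition relation. -/
abbrev UntimedFSM (S A B : Type) := Set (FTrans S A B)

/-- FSM run: input sequence, produced output sequence, final state. -/
inductive FRunTo (T : UntimedFSM S A B) : S → List A → List B → S → Prop
  | nil (s : S) : FRunTo T s [] [] s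
  | cons {s sf : S} {a : A} {rest : List A} {γ : List B} {f : FTrans S A B} :
      f ∈ T → f.src = s → f.inp = a → FRunTo T f.dst rest γ sf →
      FRunTo T s (a :: rest) (f.out :: γ) sf

def FReaches (T : UntimedFSM S A B) (s : S) (β : List A) (sf : S) : Prop :=
  ∃ γ, FRunTo T s β γ sf

/-- `out(s, β)` for an FSM (a set, i.e. a partial value, since the FSM may be partial). -/
def FOut (T : UntimedFSM S A B) (s : S) (β : List A) : Set (List B) :=
  { γ | ∃ sf, FRunTo T s β γ sf }

def FDeterministic (T : UntimedFSM S A B) : Prop :=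
  ∀ f ∈ T, ∀ f' ∈ T, f.src = f'.src → f.inp = f'.inp → f = f'

/-- Completeness of an FSM relative to an input alphabet `A0`. -/
def FCompleteOn (T : UntimedFSM S A B) (A0 : Set A) : Prop :=
  ∀ s : S, ∀ a ∈ A0, ∃ f ∈ T, f.src = s ∧ f.inp = a

/-- Synchronizing sequence for an FSM. -/
def FSync (T : UntimedFSM S A B) (β : List A) : Prop :=
  ∃ sf : S, ∀ s : S, FReaches T s β sf

/-- Homing sequence for an FSM. -/
def FHoming (T : UntimedFSM S A B) (β : List A) : Prop :=
  ∀ s1 s2 : S, FOut T s1 β = FOut T s2 β →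
    ∃ sf : S, FReaches T s1 β sf ∧ FReaches T s2 β sf

/-- The guards appearing on transitions labeled with input `i`. -/
def guardsOf (M : TFSM S I O) (i : I) : Set Guard :=
  { g | ∃ tr ∈ M, tr.inp = i ∧ tr.guard = g }

/-- Boundary points of the guards labeled `i`. -/
def boundaries (M : TFSM S I O) (i : I) : Set ℕ :=
  { p | ∃ g ∈ guardsOf M i, g.lo = p ∨ g.hi = p }

/-- `Ḡ_i`: the half-open intervals determined by consecutive boundary points of `G_i`. -/
def refinedGuards (M : TFSM S I O) (i : I) : Set Guard :=
  { g | g.rightClosed = false ∧ g.lo ∈ boundaries M i ∧ g.hi ∈ boundaries M i ∧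
        g.lo < g.hi ∧ ∀ r ∈ boundaries M i, ¬ (g.lo < r ∧ r < g.hi) }

/-- The abstract input alphabet `I_G = {(i, g) : g ∈ Ḡ_i}`. -/
def absInputs (M : TFSM S I O) : Set (I × Guard) :=
  { p | p.2 ∈ refinedGuards M p.1 }

/-- The region FSM `R(S)` of a TFSM with output delays. -/
def regionFSM (M : TFSM S I O) : UntimedFSM S (I × Guard) (O × ℕ+) :=
  { f | f.inp ∈ absInputs M ∧ ∃ tr ∈ M, tr.src = f.src ∧ tr.inp = f.inp.1 ∧
        tr.out = f.out.1 ∧ tr.delay = f.out.2 ∧ tr.dst = f.dst ∧ GuardSub f.inp.2 tr.guard }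

/-- All guards are half-open intervals `[u, v)` with `u < v`. -/
def HalfOpenGuards (M : TFSM S I O) : Prop :=
  ∀ tr ∈ M, tr.guard.rightClosed = false ∧ tr.guard.lo < tr.guard.hi

/-- Weak completeness: all states have the same domain. -/
def WeaklyComplete (M : TFSM S I O) : Prop :=
  ∀ s s' : S, TDom M s = TDom M s'

/-- `Projects M t0 α β`: `β` is the untimed projection `[α]_{I_G}` of `α`
(relative to previous timestamp `t0`). -/
inductive Projects (M : TFSM S I O) : ℝ → List (I × ℝ) → List (I × Guard) → Prop
  | nil (t0 : ℝ) : Projects M t0 [] []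
  | cons {t0 t : ℝ} {i : I} {g : Guard} {rest : List (I × ℝ)} {brest : List (I × Guard)} :
      g ∈ refinedGuards M i → GuardMem g (t - t0) →
      Projects M t rest brest →
      Projects M t0 ((i, t) :: rest) ((i, g) :: brest)

/-- All guards are point intervals `[u, u]` with `u` a positive integer. -/
def PointIntervals (M : TFSM S I O) : Prop :=
  ∀ tr ∈ M, tr.guard.rightClosed = true ∧ tr.guard.lo = tr.guard.hi ∧ 0 < tr.guard.lo

/-- The region FSM of a TFSM with only point intervals: abstract inputs are the
(input, guard) pairs appearing on transitions. -/
def pointRegionFSM (M : TFSM S I O) : UntimedFSM S (I × Guard) (O × ℕ+) :=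
  { f | ∃ tr ∈ M, tr.src = f.src ∧ (tr.inp, tr.guard) = f.inp ∧
        (tr.out, tr.delay) = f.out ∧ tr.dst = f.dst }

/-- `t(α)`: the last timestamp of `α` (0 for the empty sequence). -/
def tEnd (α : List (I × ℝ)) : ℝ := (α.map Prod.snd).getLastD 0

/-- The number of timed outputs of the run produced at or after time `t(α)`
(counted with multiplicity). -/
noncomputable def tailCount (α : List (I × ℝ)) (trs : List (TTrans S I O)) : ℕ :=
  ((rawOutputs α trs).filter (fun p => decide (tEnd α ≤ p.2))).length

/-- The timed output tail of a run: the multiset of `(o, τ - t(α))` over timed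
outputs `(o, τ)` of the run with `τ ≥ t(α)`. -/
noncomputable def tailOf (α : List (I × ℝ)) (trs : List (TTrans S I O)) : Multiset (O × ℝ) :=
  ↑(((rawOutputs α trs).filter (fun p => decide (tEnd α ≤ p.2))).map
      (fun p => (p.1, p.2 - tEnd α)))

/-- The set of all timed output tails of the TFSM, together with the empty tail. -/
def Tout (M : TFSM S I O) : Set (Multiset (O × ℝ)) :=
  insert 0 { m | ∃ (s : S) (α : List (I × ℝ)) (trs : List (TTrans S I O)) (sf : S),
    α ∈ TDom M s ∧ TRunTo M s 0 α trs sf ∧ m = tailOf α trs }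

/-- The output delay at state `j` of the machine `B_n`. -/
def BnDelay (n : ℕ) (j : Fin n) : ℕ+ :=
  if (j : ℕ) = n - 2 then 3 else if (j : ℕ) = n - 1 then 1 else 2

/-- The transition of `B_n` out of state `j`. -/
def BnTrans (n : ℕ) [NeZero n] (j : Fin n) : TTrans (Fin n) Unit Unit :=
  ⟨j, (), ⟨1, 1, true⟩, (), BnDelay n j, j + 1⟩

/-- The TFSM `B_n` with only point intervals. -/
def Bn (n : ℕ) [NeZero n] : TFSM (Fin n) Unit Unit := Set.range (BnTrans n)

theorem TRunTo.length_eq {M : TFSM S I O} {s sf : S} {t0 : ℝ} {α : List (I × ℝ)}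
    {trs : List (TTrans S I O)} (h : TRunTo M s t0 α trs sf) : trs.length = α.length := by
  induction h with
  | nil => rfl
  | cons _ _ _ _ _ ih => simp [ih]

theorem TRunTo.final_unique {M : TFSM S I O} {s sf sf' : S} {t0 t0' : ℝ} {α α' : List (I × ℝ)}
    {trs : List (TTrans S I O)} (h : TRunTo M s t0 α trs sf) (h' : TRunTo M s t0' α' trs sf') :
    sf = sf' := by
  induction h generalizing t0' α' with
  | nil => cases h'; rfl
  | cons _ _ _ _ _ ih => cases h' with | cons _ _ _ _ h5 => exact ih h5

theorem NonInteger.pairwise {α : List (I × ℝ)} (h : NonInteger α) :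
    α.Pairwise (fun p q => ∀ z : ℤ, p.2 - q.2 ≠ (z : ℝ)) := by
  rw [List.pairwise_iff_get]
  intro j k hjk
  exact h j k hjk.ne

theorem exists_delay_of_mem_rawOutputs {α : List (I × ℝ)} {trs : List (TTrans S I O)}
    {x : O × ℝ} (h : x ∈ rawOutputs α trs) :
    ∃ p ∈ α, ∃ n : ℕ, x.2 = p.2 + (n : ℝ) := by
  induction α generalizing trs with
  | nil => simp [rawOutputs] at h
  | cons p α ih =>
    cases trs with
    | nil => simp [rawOutputs] at h
    | cons tr trs =>
      simp only [rawOutputs, List.zipWith_cons_cons, List.mem_cons] at h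
      rcases h with h | h
      · exact ⟨p, by simp, tr.delay, by rw [h]⟩
      · obtain ⟨q, hq, n, hn⟩ := ih h
        exact ⟨q, by simp [hq], n, hn⟩

/-- Along a sequence with pairwise non-integer time differences, the multiset of timed outputs
determines the output and the delay of every step. -/
theorem outDelay_eq_of_perm {α : List (I × ℝ)}
    (hα : α.Pairwise (fun p q => ∀ z : ℤ, p.2 - q.2 ≠ (z : ℝ)))
    {trs trs' : List (TTrans S I O)} (hl : trs.length = α.length) (hl' : trs'.length = α.length)
    (h : List.Perm (rawOutputs α trs) (rawOutputs α trs')) :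
    trs.map (fun tr => (tr.out, tr.delay)) = trs'.map (fun tr => (tr.out, tr.delay)) := by
  induction α generalizing trs trs' with
  | nil => simp_all
  | cons p α ih =>
    cases trs with
    | nil => simp at hl
    | cons tr trs =>
    cases trs' with
    | nil => simp at hl'
    | cons tr' trs' =>
      simp only [rawOutputs, List.zipWith_cons_cons] at h
      have hm := h.subset List.mem_cons_self
      rcases List.mem_cons.1 hm with he | hm
      · have h1 := (Prod.mk.inj he).1
        have h2 : tr.delay = tr'.delay := by
          have := (Prod.mk.inj he).2
          exact PNat.coe_injective (by exact_mod_cast add_left_cancel this)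
        rw [he] at h
        rw [List.pairwise_cons] at hα
        simp only [List.map_cons, h1, h2]
        rw [ih hα.2 (by simpa using hl) (by simpa using hl') h.cons_inv]
      -- The first output of one run matches a later output of the other: the two input times
      -- then differ by an integer.
      · obtain ⟨q, hq, n, hn⟩ := exists_delay_of_mem_rawOutputs hm
        refine absurd ?_ ((List.pairwise_cons.1 hα).1 q hq ((n : ℤ) - ((tr.delay : ℕ) : ℤ)))
        push_cast
        simp only at hn
        linarith

theorem rawOutputs_congr {α : List (I × ℝ)} {trs trs' : List (TTrans S I O)}
    (h : trs.map (fun tr => (tr.out, tr.delay)) = trs'.map (fun tr => (tr.out, tr.delay))) :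
    rawOutputs α trs = rawOutputs α trs' := by
  have key : ∀ l : List (TTrans S I O), rawOutputs α l =
      List.zipWith (fun (p : I × ℝ) (x : O × ℕ+) => (x.1, p.2 + ((x.2 : ℕ) : ℝ))) α
        (l.map (fun tr => (tr.out, tr.delay))) := by
    intro l
    rw [List.zipWith_map_right]
    rfl
  rw [key, key, h]

theorem exists_sorted_perm (l : List (O × ℝ)) :
    ∃ β : List (O × ℝ), List.Perm β l ∧ List.IsChain (· ≤ ·) (β.map Prod.snd) := by
  refine ⟨l.mergeSort (fun p q => decide (p.2 ≤ q.2)), List.mergeSort_perm _ _, ?_⟩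
  rw [List.isChain_iff_pairwise, List.pairwise_map]
  refine (List.pairwise_mergeSort ?_ ?_ l).imp (by simp)
  · intro a b c hab hbc
    simp only [decide_eq_true_eq] at *
    exact hab.trans hbc
  · intro a b
    simpa using le_total a.2 b.2

/-- Determinism is not needed: a run of `α'` from `s1` is a run of `α`, and any run of `α` from
`s2` sharing a sorted output has the same outputs and delays, so it also shares those of `α'`. -/
theorem timedOut_subset_transfer {M : TFSM S I O} {α α' : List (I × ℝ)} (hni : NonInteger α)
    (hequiv : ∀ (s : S) (trs : List (TTrans S I O)), TInduces M s α trs ↔ TInduces M s α' trs)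
    {s1 s2 : S} (h : timedOut M s1 α ⊆ timedOut M s2 α) :
    timedOut M s1 α' ⊆ timedOut M s2 α' := by
  rintro β ⟨trs, sf, hrun, hperm, hchain⟩
  obtain ⟨sf1, hrun1⟩ := (hequiv s1 trs).2 ⟨sf, hrun⟩
  obtain ⟨γ, hγ, hγs⟩ := exists_sorted_perm (rawOutputs α trs)
  obtain ⟨trs2, sf2, hrun2, hperm2, -⟩ := h ⟨trs, sf1, hrun1, hγ, hγs⟩
  obtain ⟨sf2', hrun2'⟩ := (hequiv s2 trs2).1 ⟨sf2, hrun2⟩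
  have heq := outDelay_eq_of_perm hni.pairwise hrun1.length_eq hrun2.length_eq
    (hγ.symm.trans hperm2)
  exact ⟨trs2, sf2', hrun2', rawOutputs_congr (α := α') heq ▸ hperm, hchain⟩

theorem timedOut_eq_transfer {M : TFSM S I O} {α α' : List (I × ℝ)} (hni : NonInteger α)
    (hequiv : ∀ (s : S) (trs : List (TTrans S I O)), TInduces M s α trs ↔ TInduces M s α' trs)
    {s1 s2 : S} (h : timedOut M s1 α = timedOut M s2 α) :
    timedOut M s1 α' = timedOut M s2 α' :=
  (timedOut_subset_transfer hni hequiv h.subset).antisymm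
    (timedOut_subset_transfer hni hequiv h.symm.subset)

theorem TReaches.transfer {M : TFSM S I O} {α α' : List (I × ℝ)}
    (hequiv : ∀ (s : S) (trs : List (TTrans S I O)), TInduces M s α trs ↔ TInduces M s α' trs)
    {s sf : S} (h : TReaches M s α sf) : TReaches M s α' sf := by
  obtain ⟨trs, hrun⟩ := h
  obtain ⟨sf', hrun'⟩ := (hequiv s trs).1 ⟨sf, hrun⟩
  exact ⟨trs, hrun.final_unique hrun' ▸ hrun'⟩

theorem THoming.transfer {M : TFSM S I O} {α α' : List (I × ℝ)} (hα' : IsTimedInputSeq α')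
    (hni' : NonInteger α')
    (hequiv : ∀ (s : S) (trs : List (TTrans S I O)), TInduces M s α trs ↔ TInduces M s α' trs)
    (h : THoming M α) : THoming M α' := by
  refine ⟨hα', fun s1 s2 heq => ?_⟩
  obtain ⟨sf, h1, h2⟩ := h.2 s1 s2
    (timedOut_eq_transfer hni' (fun s trs => (hequiv s trs).symm) heq)
  exact ⟨sf, h1.transfer hequiv, h2.transfer hequiv⟩

/-- two non-integer timed input sequences with the same inputs that are
equivalent for the TFSM (induce exactly the same sequences of transitions from every
state) are homing simultaneously. -/
theorem stmt4 {S I O : Type} [Fintype S] [Nonempty S] [Fintype I] [Nonempty I]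
    [Fintype O] [Nonempty O]
    (M : TFSM S I O) (hfin : Set.Finite M) (hdet : TFSMDeterministic M)
    (α α' : List (I × ℝ)) (hα : IsTimedInputSeq α) (hα' : IsTimedInputSeq α')
    (hni : NonInteger α) (hni' : NonInteger α')
    (hinp : α.map Prod.fst = α'.map Prod.fst)
    (hequiv : ∀ (s : S) (trs : List (TTrans S I O)), TInduces M s α trs ↔ TInduces M s α' trs) :
    THoming M α ↔ THoming M α' := by
  exact ⟨THoming.transfer hα' hni' hequiv,
    THoming.transfer hα hni fun s trs => (hequiv s trs).symm⟩
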